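/- If ξ is an absolutely continuous vector field along γ|[0,s*] with ∫_0^{s*} (E−V(γ)) g(Dξ/ds, Dξ/ds) ds < ∞ and ξ(s*) = W, then ξ is bounded, and its sup norm satisfies ‖ξ‖_∞ ≤ ‖W‖ + ( ∫_0^{s*} (E−V(γ)) ‖Dξ/ds‖² ds )^{1/2} ( ∫_0^{s*} ‖γ̇‖² ds )^{1/2}, where ∫_0^{s*} ‖γ̇‖² ds is finite since ‖γ̇(s)‖ behaves like s^{−1/3} as s → 0⁺. -/

import Mathlib

open MeasureTheory Set Matrix Filter Topology

namespace JacobiPaper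

noncomputable section

/-- Points/vectors of the ambient space `ℝ^N` in which the manifold `M` is
topologically embedded as an open subset. -/
abbrev Vec (N : ℕ) := Fin N → ℝ

variable {N : ℕ}

/-- The inner product determined by a field of matrices `g` at the point `x`. -/
def gP (g : Vec N → Matrix (Fin N) (Fin N) ℝ) (x v w : Vec N) : ℝ :=
  ∑ i, ∑ j, g x i j * v i * w j

/-- The Euclidean gradient (the differential, as a vector). -/
def euclGrad (V : Vec N → ℝ) (x : Vec N) : Vec N :=
  fun i => fderiv ℝ V x (Pi.single i 1)

/-- The setting of the paper: a `C³` Riemannian metric `g` on a neighborhood `U` of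
the compact sublevel `V⁻¹((-∞,E])`, with `V` of class `C²` there and `E` a regular
value of `V`. -/
structure Setting (N : ℕ) where
  g : Vec N → Matrix (Fin N) (Fin N) ℝ
  V : Vec N → ℝ
  E : ℝ
  U : Set (Vec N)
  hdim : 1 ≤ N
  hU : IsOpen U
  hsub : {x | V x ≤ E} ⊆ U
  hgC : ∀ i j, ContDiffOn ℝ 3 (fun x => g x i j) U
  hgsymm : ∀ x ∈ U, ∀ i j, g x i j = g x j i
  hgpos : ∀ x ∈ U, ∀ v : Vec N, v ≠ 0 → 0 < gP g x v v
  hVC : ContDiffOn ℝ 2 V U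
  hreg : ∀ x, V x = E → euclGrad V x ≠ 0
  hcomp : IsCompact {x : Vec N | V x ≤ E}

namespace Setting

variable (S : Setting N)

/-- The Riemannian inner product `g_x(v,w)`. -/
def prod (x v w : Vec N) : ℝ := gP S.g x v w

/-- The Riemannian norm `‖v‖_x`. -/
def gnorm (x v : Vec N) : ℝ := Real.sqrt (S.prod x v v)

/-- The gradient of `V` with respect to `g`. -/
def grad (x : Vec N) : Vec N := (S.g x)⁻¹ *ᵥ euclGrad S.V x

/-- Christoffel symbols `Γ^k_{ij}` of the Levi-Civita connection of `g`. -/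
def christoffel (x : Vec N) (k i j : Fin N) : ℝ :=
  (1/2) * ∑ l, (S.g x)⁻¹ k l *
    (fderiv ℝ (fun y => S.g y l j) x (Pi.single i 1)
     + fderiv ℝ (fun y => S.g y l i) x (Pi.single j 1)
     - fderiv ℝ (fun y => S.g y i j) x (Pi.single l 1))

/-- Covariant derivative, along the curve `q` with velocity `q'`, of the vector field
`ξ` whose (pointwise) derivative is `ξ'`. -/
def covD (q q' ξ ξ' : ℝ → Vec N) (s : ℝ) : Vec N :=
  fun k => ξ' s k + ∑ i, ∑ j, S.christoffel (q s) k i j * q' s i * ξ s j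

/-- The Riemann curvature tensor `R(u,v)w` of `g` at `x`. -/
def curv (x u v w : Vec N) : Vec N :=
  fun l => ∑ i, ∑ j, ∑ k, u i * v j * w k *
    (fderiv ℝ (fun y => S.christoffel y l j k) x (Pi.single i 1)
     - fderiv ℝ (fun y => S.christoffel y l i k) x (Pi.single j 1)
     + ∑ m, (S.christoffel x l i m * S.christoffel x m j k
             - S.christoffel x l j m * S.christoffel x m i k))

/-- The Hessian operator of `V` with respect to `g`: `ξ ↦ ∇_ξ ∇V`. -/
def hessV (x ξ : Vec N) : Vec N :=
  fun k => ∑ i, ξ i * (fderiv ℝ (fun y => S.grad y k) x (Pi.single i 1)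
    + ∑ j, S.christoffel x k i j * S.grad x j)

/-- The Jacobi-metric geodesic equation (eq. (2.5) of the paper) at the instant `s`,
for a curve `x` with derivative `x'` and second derivative `x''`. -/
def GeoEqAt (x x' x'' : ℝ → Vec N) (s : ℝ) : Prop :=
  ∀ k, (S.E - S.V (x s)) * S.covD x x' x' x'' s k
    - S.prod (x s) (S.grad (x s)) (x' s) * x' s k
    + (1/2) * S.prod (x s) (x' s) (x' s) * S.grad (x s) k = 0

end Setting

/-- `q` is of class `C²` on `I` with first derivative `q'` and second derivative `q''`. -/
def C2OnWith (q q' q'' : ℝ → Vec N) (I : Set ℝ) : Prop :=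
  (∀ t ∈ I, HasDerivWithinAt q (q' t) I t) ∧
  (∀ t ∈ I, HasDerivWithinAt q' (q'' t) I t) ∧
  ContinuousOn q'' I

/-- `x` belongs to the Sobolev space `H¹([a,b],ℝ^N)`: it is absolutely continuous
(primitive of its a.e. derivative) with square-integrable derivative. -/
def H1On (x : ℝ → Vec N) (a b : ℝ) : Prop :=
  ContinuousOn x (Icc a b) ∧
  IntegrableOn (deriv x) (Icc a b) ∧
  IntegrableOn (fun s => ‖deriv x s‖ ^ 2) (Icc a b) ∧
  ∀ t ∈ Icc a b, x t = x a + ∫ s in a..t, deriv x s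

/-- `x` is absolutely continuous on `[a,b]`. -/
def ACOn (x : ℝ → Vec N) (a b : ℝ) : Prop :=
  ContinuousOn x (Icc a b) ∧
  IntegrableOn (deriv x) (Icc a b) ∧
  ∀ t ∈ Icc a b, x t = x a + ∫ s in a..t, deriv x s

namespace Setting

variable (S : Setting N)

/-- The weak (distributional) form (eq. (2.7)) of the Jacobi geodesic equation on `(a,b)`,
tested against all `ξ ∈ C^∞_0((a,b),ℝ^N)`. -/
def WeakGeo (x : ℝ → Vec N) (a b : ℝ) : Prop :=
  ∀ ξ : ℝ → Vec N, ContDiff ℝ (⊤ : ℕ∞) ξ → tsupport ξ ⊆ Ioo a b →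
    (∫ s in a..b,
      ((S.E - S.V (x s)) * S.prod (x s) (deriv x s) (S.covD x (deriv x) ξ (deriv ξ) s)
        - (1/2) * S.prod (x s) (deriv x s) (deriv x s)
            * S.prod (x s) (S.grad (x s)) (ξ s))) = 0

/-- The space `X_Q`. -/
def InXQ (Q : Vec N) (x : ℝ → Vec N) : Prop :=
  H1On x 0 1 ∧ S.V (x 0) = S.E ∧ (∀ s ∈ Ioc (0:ℝ) 1, S.V (x s) < S.E) ∧ x 1 = Q

/-- The Jacobi length functional `L_V`. -/
def LV (x : ℝ → Vec N) : ℝ :=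
  ∫ s in (0:ℝ)..1,
    Real.sqrt ((1/2) * (S.E - S.V (x s)) * S.prod (x s) (deriv x s) (deriv x s))

/-- The distance `d_V(Q)` from `Q` to the boundary of the potential well. -/
def dV (Q : Vec N) : ℝ := sInf {r | ∃ x, S.InXQ Q x ∧ r = S.LV x}

/-- `γ : [0,a] → M` is a `g_*`-geodesic starting at `V⁻¹(E)`, staying in the potential
well for `s > 0`, parameterized by arc length (`½ g(γ̇,γ̇)(E−V(γ)) ≡ 1`). -/
def IsBdryGeo (γ : ℝ → Vec N) (a : ℝ) : Prop :=
  0 < a ∧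
  ContinuousOn γ (Icc 0 a) ∧
  (∀ s ∈ Ioc (0:ℝ) a, ContDiffAt ℝ 2 γ s) ∧
  S.V (γ 0) = S.E ∧
  (∀ s ∈ Ioc (0:ℝ) a, S.V (γ s) < S.E) ∧
  (∀ s ∈ Ioc (0:ℝ) a, S.GeoEqAt γ (deriv γ) (deriv (deriv γ)) s) ∧
  (∀ s ∈ Ioc (0:ℝ) a, (1/2) * S.prod (γ s) (deriv γ s) (deriv γ s) * (S.E - S.V (γ s)) = 1)

/-- The index form `I_{s₁,s₂}(ξ,η)` along `γ`. -/
def idxForm (γ : ℝ → Vec N) (s₁ s₂ : ℝ) (ξ η : ℝ → Vec N) : ℝ :=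
  ∫ u in s₁..s₂,
    ((S.E - S.V (γ u)) *
        (S.prod (γ u) (S.covD γ (deriv γ) ξ (deriv ξ) u) (S.covD γ (deriv γ) η (deriv η) u)
          + S.prod (γ u) (S.curv (γ u) (deriv γ u) (ξ u) (deriv γ u)) (η u))
      - (S.prod (γ u) (S.grad (γ u)) (ξ u)
            * S.prod (γ u) (deriv γ u) (S.covD γ (deriv γ) η (deriv η) u)
          + S.prod (γ u) (deriv γ u) (S.covD γ (deriv γ) ξ (deriv ξ) u)
            * S.prod (γ u) (S.grad (γ u)) (η u)
          + (1/2) * S.prod (γ u) (S.hessV (γ u) (ξ u)) (η u)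
            * S.prod (γ u) (deriv γ u) (deriv γ u)))

/-- Membership in the space `Y_s^W`: absolutely continuous vector fields along `γ|[0,s]`
with finite weighted norm, with `ξ(0) ∈ T_{γ(0)}V⁻¹(E)` and `ξ(s) = W`. -/
def InY (γ : ℝ → Vec N) (s : ℝ) (W : Vec N) (ξ : ℝ → Vec N) : Prop :=
  ACOn ξ 0 s ∧
  IntegrableOn (fun u => (S.E - S.V (γ u)) *
      S.prod (γ u) (S.covD γ (deriv γ) ξ (deriv ξ) u)
        (S.covD γ (deriv γ) ξ (deriv ξ) u)) (Icc 0 s) ∧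
  S.prod (γ 0) (S.grad (γ 0)) (ξ 0) = 0 ∧
  ξ s = W

/-- The weighted squared norm `⟨ξ,ξ⟩_{0,s}`. -/
def wNormSq (γ : ℝ → Vec N) (s : ℝ) (ξ : ℝ → Vec N) : ℝ :=
  ∫ u in (0:ℝ)..s, (S.E - S.V (γ u)) *
    S.prod (γ u) (S.covD γ (deriv γ) ξ (deriv ξ) u) (S.covD γ (deriv γ) ξ (deriv ξ) u)

/-- The Jacobi field equation (eq. (4.9)) at the instant `u`. -/
def JacobiEqAt (γ ξ : ℝ → Vec N) (u : ℝ) : Prop :=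
  ∀ k, - deriv (fun t => (S.E - S.V (γ t)) * S.covD γ (deriv γ) ξ (deriv ξ) t k) u
      + (S.E - S.V (γ u)) * S.curv (γ u) (deriv γ u) (ξ u) (deriv γ u) k
      + deriv (fun t => S.prod (γ t) (S.grad (γ t)) (ξ t) * deriv γ t k) u
      - S.prod (γ u) (deriv γ u) (S.covD γ (deriv γ) ξ (deriv ξ) u) * S.grad (γ u) k
      - (1/2) * S.prod (γ u) (deriv γ u) (deriv γ u) * S.hessV (γ u) (ξ u) k = 0

/-- `ξ` is a Jacobi field along `γ|[0,s]`: of class `C⁰([0,s]) ∩ C²((0,s])` and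
solving the Jacobi equation on `(0,s]`. -/
def IsJacobi (γ ξ : ℝ → Vec N) (s : ℝ) : Prop :=
  ContinuousOn ξ (Icc 0 s) ∧ (∀ u ∈ Ioc (0:ℝ) s, ContDiffAt ℝ 2 ξ u) ∧
  ∀ u ∈ Ioc (0:ℝ) s, S.JacobiEqAt γ ξ u

/-- The boundary condition (eq. (4.10)): the continuous extension at `s = 0` of
`(E−V(γ))Dξ/ds − g(∇V(γ),ξ)γ̇` is parallel to `∇V(γ(0))`. -/
def BdryCond (γ ξ : ℝ → Vec N) : Prop :=
  ∃ c : ℝ, Tendsto (fun u => (fun k => (S.E - S.V (γ u)) * S.covD γ (deriv γ) ξ (deriv ξ) u k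
      - S.prod (γ u) (S.grad (γ u)) (ξ u) * deriv γ u k))
    (nhdsWithin 0 (Ioi 0)) (nhds (c • S.grad (γ 0)))

end Setting

/-- The family `ξ : Fin n → (ℝ → Vec N)` is linearly independent as fields on `I`. -/
def IndepOn {n : ℕ} (I : Set ℝ) (ξ : Fin n → ℝ → Vec N) : Prop :=
  ∀ c : Fin n → ℝ, (∀ u ∈ I, (∑ i, c i • ξ i) u = 0) → c = 0

/-- The index of the quadratic form `B` on the class `C` of vector fields (regarded as
fields on `I`) is at least `n`. -/
def IndexGe {N : ℕ} (B : (ℝ → Vec N) → ℝ) (C : (ℝ → Vec N) → Prop) (I : Set ℝ) (n : ℕ) : Prop :=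
  ∃ ξ : Fin n → ℝ → Vec N, (∀ i, C (ξ i)) ∧ IndepOn I ξ ∧
    ∀ c : Fin n → ℝ, c ≠ 0 → B (∑ i, c i • ξ i) < 0

/-- The index of the quadratic form `B` on the class `C` equals `n`. -/
def IndexEq {N : ℕ} (B : (ℝ → Vec N) → ℝ) (C : (ℝ → Vec N) → Prop) (I : Set ℝ) (n : ℕ) : Prop :=
  IndexGe B C I n ∧ ¬ IndexGe B C I (n+1)

/-- The nullity of a bilinear form `B` on the class `C` is at least `n`. -/
def NullGe {N : ℕ} (B : (ℝ → Vec N) → (ℝ → Vec N) → ℝ) (C : (ℝ → Vec N) → Prop)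
    (I : Set ℝ) (n : ℕ) : Prop :=
  ∃ ξ : Fin n → ℝ → Vec N, (∀ i, C (ξ i)) ∧ IndepOn I ξ ∧
    ∀ i, ∀ η, C η → B (ξ i) η = 0

/-- The nullity of a bilinear form `B` on the class `C` equals `n`. -/
def NullEq {N : ℕ} (B : (ℝ → Vec N) → (ℝ → Vec N) → ℝ) (C : (ℝ → Vec N) → Prop)
    (I : Set ℝ) (n : ℕ) : Prop :=
  NullGe B C I n ∧ ¬ NullGe B C I (n+1)

namespace Setting

variable (S : Setting N)

/-- `ξ` is a (nontrivial candidate) field realizing conjugacy at `γ(s)`: a Jacobi field in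
`Y_s` satisfying the boundary condition (4.10). -/
def ConjField (γ : ℝ → Vec N) (s : ℝ) (ξ : ℝ → Vec N) : Prop :=
  S.InY γ s 0 ξ ∧ S.IsJacobi γ ξ s ∧ S.BdryCond γ ξ

/-- `γ(s)` is conjugate to `V⁻¹(E)` with multiplicity at least `n`. -/
def MultGe (γ : ℝ → Vec N) (s : ℝ) (n : ℕ) : Prop :=
  ∃ ξ : Fin n → ℝ → Vec N, (∀ i, S.ConjField γ s (ξ i)) ∧ IndepOn (Icc 0 s) ξ

/-- `γ(s)` is conjugate to `V⁻¹(E)`. -/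
def IsConj (γ : ℝ → Vec N) (s : ℝ) : Prop := S.MultGe γ s 1

/-- `γ(s)` is conjugate to `V⁻¹(E)` with multiplicity exactly `n`. -/
def Mult (γ : ℝ → Vec N) (s : ℝ) (n : ℕ) : Prop :=
  S.MultGe γ s n ∧ ¬ S.MultGe γ s (n+1)

end Setting

namespace Setting

variable (S : Setting N)

lemma prod_eq_dotProduct (x v w : Vec N) : S.prod x v w = v ⬝ᵥ (S.g x *ᵥ w) := by
  simp only [prod, gP, dotProduct, mulVec, Finset.mul_sum]
  exact Finset.sum_congr rfl fun i _ => Finset.sum_congr rfl fun j _ => by ring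

variable {S}

lemma transpose_g {x : Vec N} (hx : x ∈ S.U) : (S.g x)ᵀ = S.g x := by
  ext i j
  exact S.hgsymm x hx j i

lemma prod_comm {x : Vec N} (hx : x ∈ S.U) (v w : Vec N) : S.prod x v w = S.prod x w v := by
  rw [prod_eq_dotProduct, prod_eq_dotProduct, dotProduct_mulVec, ← mulVec_transpose,
    transpose_g hx, dotProduct_comm]

lemma prod_self_nonneg {x : Vec N} (hx : x ∈ S.U) (v : Vec N) : 0 ≤ S.prod x v v := by
  rcases eq_or_ne v 0 with rfl | hv
  · simp [prod, gP]
  · exact (S.hgpos x hx v hv).le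

lemma prod_sq_le {x : Vec N} (hx : x ∈ S.U) (v w : Vec N) :
    S.prod x v w ^ 2 ≤ S.prod x v v * S.prod x w w := by
  rcases eq_or_ne w 0 with rfl | hw
  · simp [prod, gP]
  have hw' : 0 < S.prod x w w := S.hgpos x hx w hw
  have h := prod_self_nonneg hx (S.prod x w w • v - S.prod x v w • w)
  have e : S.prod x (S.prod x w w • v - S.prod x v w • w)
      (S.prod x w w • v - S.prod x v w • w)
      = S.prod x w w * (S.prod x v v * S.prod x w w - S.prod x v w ^ 2) := by
    have hc := prod_comm hx w v
    simp only [prod_eq_dotProduct, mulVec_sub, mulVec_smul, sub_dotProduct, dotProduct_sub,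
      smul_dotProduct, dotProduct_smul, smul_eq_mul] at hc ⊢
    rw [hc]
    ring
  rw [e] at h
  have := nonneg_of_mul_nonneg_right h hw'
  linarith

lemma det_g_pos {x : Vec N} (hx : x ∈ S.U) : 0 < (S.g x).det := by
  refine (Matrix.PosDef.of_dotProduct_mulVec_pos ?_ fun v hv => ?_).det_pos
  · ext i j
    simpa using S.hgsymm x hx j i
  · have h : 0 < S.prod x v v := S.hgpos x hx v hv
    rw [prod_eq_dotProduct] at h
    simpa using h

lemma g_mul_inv {x : Vec N} (hx : x ∈ S.U) : S.g x * (S.g x)⁻¹ = 1 :=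
  Matrix.mul_nonsing_inv _ (det_g_pos hx).ne'.isUnit

lemma prod_inv_mulVec {x : Vec N} (hx : x ∈ S.U) (z v : Vec N) :
    S.prod x v ((S.g x)⁻¹ *ᵥ z) = v ⬝ᵥ z := by
  rw [prod_eq_dotProduct, mulVec_mulVec, g_mul_inv hx, one_mulVec]

lemma fderiv_eq_euclGrad (V : Vec N → ℝ) (x v : Vec N) :
    fderiv ℝ V x v = v ⬝ᵥ euclGrad V x := by
  conv_lhs => rw [pi_eq_sum_univ' v]
  simp only [map_sum, map_smul, dotProduct, euclGrad, smul_eq_mul]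

lemma prod_grad {x : Vec N} (hx : x ∈ S.U) (v : Vec N) :
    S.prod x (S.grad x) v = fderiv ℝ S.V x v := by
  rw [prod_comm hx, grad, prod_inv_mulVec hx, fderiv_eq_euclGrad]

/-- The `k`-th coordinate of `v` is the product with the `k`-th column of the inverse metric. -/
lemma coord_sq_le {x : Vec N} (hx : x ∈ S.U) (v : Vec N) (k : Fin N) :
    v k ^ 2 ≤ S.prod x v v * (S.g x)⁻¹ k k := by
  have h := prod_sq_le hx v ((S.g x)⁻¹ *ᵥ Pi.single k 1)
  rw [prod_inv_mulVec hx, prod_inv_mulVec hx] at h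
  simpa using h

lemma continuousAt_g {x : Vec N} (hx : x ∈ S.U) : ContinuousAt S.g x :=
  continuousAt_pi.2 fun i => continuousAt_pi.2 fun j =>
    (S.hgC i j).continuousOn.continuousAt (S.hU.mem_nhds hx)

lemma continuousAt_inv_g {x : Vec N} (hx : x ∈ S.U) : ContinuousAt (fun y => (S.g y)⁻¹) x := by
  have h := continuousAt_g hx
  simp only [Matrix.inv_def, Ring.inverse_eq_inv']
  have hd : ContinuousAt (fun y => (S.g y).det) x :=
    (Continuous.matrix_det continuous_id).continuousAt.comp h
  have ha : ContinuousAt (fun y => (S.g y).adjugate) x :=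
    (Continuous.matrix_adjugate continuous_id).continuousAt.comp h
  exact (hd.inv₀ (det_g_pos hx).ne').smul ha

lemma continuousAt_inv_g_apply {x : Vec N} (hx : x ∈ S.U) (i j : Fin N) :
    ContinuousAt (fun y => (S.g y)⁻¹ i j) x :=
  continuousAt_pi.1 (continuousAt_pi.1 (continuousAt_inv_g hx) i) j

lemma contDiffAt_V {x : Vec N} (hx : x ∈ S.U) : ContDiffAt ℝ 2 S.V x :=
  S.hVC.contDiffAt (S.hU.mem_nhds hx)

lemma contDiffAt_g {x : Vec N} (hx : x ∈ S.U) (i j : Fin N) :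
    ContDiffAt ℝ 3 (fun y => S.g y i j) x :=
  (S.hgC i j).contDiffAt (S.hU.mem_nhds hx)

lemma continuousAt_grad {x : Vec N} (hx : x ∈ S.U) (k : Fin N) :
    ContinuousAt (fun y => S.grad y k) x := by
  have h : ContinuousAt (fun y => fderiv ℝ S.V y) x :=
    (contDiffAt_V hx).continuousAt_fderiv (by norm_num)
  simp only [grad, mulVec, dotProduct, euclGrad]
  exact tendsto_finsetSum _ fun i _ =>
    (continuousAt_inv_g_apply hx k i).mul (h.clm_apply continuousAt_const)

lemma continuousAt_christoffel {x : Vec N} (hx : x ∈ S.U) (k i j : Fin N) :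
    ContinuousAt (fun y => S.christoffel y k i j) x := by
  have h (i j : Fin N) (v : Vec N) :
      ContinuousAt (fun y => fderiv ℝ (fun z => S.g z i j) y v) x :=
    ((contDiffAt_g hx i j).continuousAt_fderiv (by norm_num)).clm_apply continuousAt_const
  simp only [christoffel]
  exact continuousAt_const.mul (tendsto_finsetSum _ fun l _ =>
    (continuousAt_inv_g_apply hx k l).mul (((h _ _ _).add (h _ _ _)).sub (h _ _ _)))

lemma dotProduct_grad_pos {x : Vec N} (hx : x ∈ S.U) (h : euclGrad S.V x ≠ 0) :
    0 < ∑ k, euclGrad S.V x k * S.grad x k := by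
  have hg : S.grad x ≠ 0 := by
    intro h0
    apply h
    have := congrArg (S.g x *ᵥ ·) h0
    simpa [grad, mulVec_mulVec, g_mul_inv hx] using this
  have h1 : 0 < S.prod x (S.grad x) (S.grad x) := S.hgpos x hx _ hg
  rw [prod_grad hx, fderiv_eq_euclGrad, dotProduct_comm] at h1
  exact h1

end Setting

namespace Setting

variable {S : Setting N} {γ : ℝ → Vec N} {a : ℝ}

namespace IsBdryGeo

lemma mem_U (hγ : S.IsBdryGeo γ a) {s : ℝ} (hs : s ∈ Icc 0 a) : γ s ∈ S.U := by
  obtain ⟨-, -, -, h0, hlt, -⟩ := hγ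
  apply S.hsub
  rcases hs.1.eq_or_lt with rfl | h
  · exact h0.le
  · exact (hlt s ⟨h, hs.2⟩).le

lemma energy_pos (hγ : S.IsBdryGeo γ a) {s : ℝ} (hs : s ∈ Ioc 0 a) :
    0 < S.E - S.V (γ s) :=
  sub_pos.2 (hγ.2.2.2.2.1 s hs)

lemma continuousOn_energy (hγ : S.IsBdryGeo γ a) :
    ContinuousOn (fun s => S.E - S.V (γ s)) (Icc 0 a) := fun s hs =>
  continuousWithinAt_const.sub
    ((contDiffAt_V (hγ.mem_U hs)).continuousAt.comp_continuousWithinAt (hγ.2.1 s hs))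

lemma prod_deriv_eq (hγ : S.IsBdryGeo γ a) {s : ℝ} (hs : s ∈ Ioc 0 a) :
    S.prod (γ s) (deriv γ s) (deriv γ s) = 2 / (S.E - S.V (γ s)) := by
  have h := hγ.2.2.2.2.2.2 s hs
  rw [eq_div_iff (hγ.energy_pos hs).ne']
  linarith

lemma hasDerivAt_curve (hγ : S.IsBdryGeo γ a) {s : ℝ} (hs : s ∈ Ioc 0 a) :
    HasDerivAt γ (deriv γ s) s :=
  ((hγ.2.2.1 s hs).differentiableAt (by norm_num)).hasDerivAt

lemma hasDerivAt_velocity (hγ : S.IsBdryGeo γ a) {s : ℝ} (hs : s ∈ Ioc 0 a) :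
    HasDerivAt (deriv γ) (deriv (deriv γ) s) s := by
  have h : ContDiffAt ℝ 1 (fderiv ℝ γ) s := (hγ.2.2.1 s hs).fderiv_right (by norm_num)
  have h' : DifferentiableAt ℝ (fun t => fderiv ℝ γ t 1) s :=
    (h.differentiableAt (by norm_num)).clm_apply (differentiableAt_const _)
  simp only [fderiv_apply_one_eq_deriv] at h'
  exact h'.hasDerivAt

lemma hasDerivAt_energy (hγ : S.IsBdryGeo γ a) {s : ℝ} (hs : s ∈ Ioc 0 a) :
    HasDerivAt (fun t => S.E - S.V (γ t)) (-fderiv ℝ S.V (γ s) (deriv γ s)) s :=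
  (((contDiffAt_V (hγ.mem_U (Ioc_subset_Icc_self hs))).differentiableAt
    (by norm_num)).hasFDerivAt.comp_hasDerivAt s (hγ.hasDerivAt_curve hs)).const_sub _

/-- Newton law for the momentum `(E - V(γ)) γ̇` of a geodesic of the Jacobi metric. -/
lemma hasDerivAt_momentum (hγ : S.IsBdryGeo γ a) {s : ℝ} (hs : s ∈ Ioc 0 a) (k : Fin N) :
    HasDerivAt (fun t => (S.E - S.V (γ t)) * deriv γ t k)
      (-(1 / (S.E - S.V (γ s)) * (S.grad (γ s) k + ∑ i, ∑ j, S.christoffel (γ s) k i j *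
        ((S.E - S.V (γ s)) * deriv γ s i) * ((S.E - S.V (γ s)) * deriv γ s j)))) s := by
  have hf := hγ.energy_pos hs
  have h := (hγ.hasDerivAt_energy hs).mul (hasDerivAt_pi.1 (hγ.hasDerivAt_velocity hs) k)
  refine h.congr_deriv ?_
  have hgeo := hγ.2.2.2.2.2.1 s hs k
  rw [prod_grad (hγ.mem_U (Ioc_subset_Icc_self hs)), hγ.prod_deriv_eq hs, covD] at hgeo
  have hsum : ∑ i, ∑ j, S.christoffel (γ s) k i j *
        ((S.E - S.V (γ s)) * deriv γ s i) * ((S.E - S.V (γ s)) * deriv γ s j)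
      = (S.E - S.V (γ s)) ^ 2 *
        ∑ i, ∑ j, S.christoffel (γ s) k i j * deriv γ s i * deriv γ s j := by
    simp only [Finset.mul_sum]
    exact Finset.sum_congr rfl fun i _ => Finset.sum_congr rfl fun j _ => by ring
  rw [hsum]
  generalize ∑ i, ∑ j, S.christoffel (γ s) k i j * deriv γ s i * deriv γ s j = G at *
  generalize S.E - S.V (γ s) = f at *
  field_simp at hgeo ⊢
  linarith

lemma continuousWithinAt_momentum_zero (hγ : S.IsBdryGeo γ a) (k : Fin N) :
    ContinuousWithinAt (fun t => (S.E - S.V (γ t)) * deriv γ t k) (Icc 0 a) 0 := by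
  have h0 : (0 : ℝ) ∈ Icc 0 a := ⟨le_rfl, hγ.1.le⟩
  have hE : S.E - S.V (γ 0) = 0 := sub_eq_zero.2 hγ.2.2.2.1.symm
  have hc : ContinuousWithinAt
      (fun t => √(2 * (S.E - S.V (γ t)) * (S.g (γ t))⁻¹ k k)) (Icc 0 a) 0 :=
    ((continuousWithinAt_const.mul (hγ.continuousOn_energy 0 h0)).mul
      ((continuousAt_inv_g_apply (hγ.mem_U h0) k k).comp_continuousWithinAt
        (hγ.2.1 0 h0))).sqrt
  simp only [ContinuousWithinAt, hE, mul_zero, zero_mul, Real.sqrt_zero] at hc ⊢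
  refine squeeze_zero_norm' ?_ hc
  filter_upwards [self_mem_nhdsWithin] with s hs
  rw [Real.norm_eq_abs]
  apply Real.abs_le_sqrt
  rcases hs.1.eq_or_lt with rfl | hpos
  · simp [hE]
  have hs' : s ∈ Ioc 0 a := ⟨hpos, hs.2⟩
  have hf := hγ.energy_pos hs'
  have h := coord_sq_le (hγ.mem_U hs) (deriv γ s) k
  rw [hγ.prod_deriv_eq hs'] at h
  calc ((S.E - S.V (γ s)) * deriv γ s k) ^ 2
      = (S.E - S.V (γ s)) ^ 2 * deriv γ s k ^ 2 := by ring
    _ ≤ (S.E - S.V (γ s)) ^ 2 * (2 / (S.E - S.V (γ s)) * (S.g (γ s))⁻¹ k k) := by gcongr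
    _ = 2 * (S.E - S.V (γ s)) * (S.g (γ s))⁻¹ k k := by field_simp

lemma continuousOn_momentum (hγ : S.IsBdryGeo γ a) (k : Fin N) :
    ContinuousOn (fun t => (S.E - S.V (γ t)) * deriv γ t k) (Icc 0 a) := by
  intro s hs
  rcases hs.1.eq_or_lt with rfl | hpos
  · exact hγ.continuousWithinAt_momentum_zero k
  · exact (hγ.hasDerivAt_momentum ⟨hpos, hs.2⟩ k).continuousAt.continuousWithinAt

lemma integrableOn_inv_energy (hγ : S.IsBdryGeo γ a) :
    IntegrableOn (fun s => 1 / (S.E - S.V (γ s))) (Ioc 0 a) := by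
  have h0 : (0 : ℝ) ∈ Icc 0 a := ⟨le_rfl, hγ.1.le⟩
  set w := euclGrad S.V (γ 0)
  set G : ℝ → ℝ := fun s => ∑ k, w k * (S.grad (γ s) k + ∑ i, ∑ j, S.christoffel (γ s) k i j *
        ((S.E - S.V (γ s)) * deriv γ s i) * ((S.E - S.V (γ s)) * deriv γ s j)) with hG
  have hGc : ContinuousWithinAt G (Icc 0 a) 0 := by
    have hcomp {φ : Vec N → ℝ} (h : ContinuousAt φ (γ 0)) :
        ContinuousWithinAt (fun s => φ (γ s)) (Icc 0 a) 0 :=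
      h.comp_continuousWithinAt (hγ.2.1 0 h0)
    have hU := hγ.mem_U h0
    exact tendsto_finsetSum _ fun k _ => continuousWithinAt_const.mul
      ((hcomp (continuousAt_grad hU k)).add (tendsto_finsetSum _ fun i _ =>
        tendsto_finsetSum _ fun j _ => ((hcomp (continuousAt_christoffel hU k i j)).mul
          (hγ.continuousWithinAt_momentum_zero i)).mul (hγ.continuousWithinAt_momentum_zero j)))
  have hG0 : 0 < G 0 := by
    simpa [hG, hγ.2.2.2.1] using dotProduct_grad_pos (hγ.mem_U h0) (S.hreg _ hγ.2.2.2.1)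
  obtain ⟨δ, hδ, hGδ⟩ : ∃ δ ∈ Ioc 0 a, ∀ s ∈ Icc 0 δ, G 0 / 2 ≤ G s := by
    have := hGc.eventually (eventually_ge_nhds (half_lt_self hG0))
    obtain ⟨ε, hε, h⟩ := Metric.mem_nhdsWithin_iff.1 this
    refine ⟨min (ε / 2) a, ⟨lt_min (by positivity) hγ.1, min_le_right _ _⟩, fun s hs => ?_⟩
    refine h ⟨?_, hs.1, hs.2.trans (min_le_right _ _)⟩
    rw [Metric.mem_ball, Real.dist_eq, sub_zero, abs_of_nonneg hs.1]
    linarith [hs.2.trans (min_le_left _ _)]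
  have hsub : Icc 0 δ ⊆ Icc 0 a := Icc_subset_Icc_right hδ.2
  have hmeas : ContinuousOn (fun s => 1 / (S.E - S.V (γ s))) (Ioc 0 a) :=
    continuousOn_const.div (hγ.continuousOn_energy.mono Ioc_subset_Icc_self)
      fun s hs => (hγ.energy_pos hs).ne'
  have hint : IntegrableOn (fun s => 1 / (S.E - S.V (γ s)) * G s) (Ioc 0 δ) := by
    refine intervalIntegral.integrableOn_deriv_of_nonneg
      (g := fun t => -∑ k, w k * ((S.E - S.V (γ t)) * deriv γ t k)) ?_ (fun s hs => ?_)
      fun s hs => ?_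
    · exact (continuousOn_finsetSum _ fun k _ => continuousOn_const.mul
        ((hγ.continuousOn_momentum k).mono hsub)).neg
    · have hs' : s ∈ Ioc 0 a := ⟨hs.1, hs.2.le.trans hδ.2⟩
      have h := (HasDerivAt.fun_sum (u := Finset.univ) fun k _ =>
        (hγ.hasDerivAt_momentum hs' k).const_mul (w k)).neg
      refine h.congr_deriv ?_
      rw [hG, ← Finset.sum_neg_distrib, Finset.mul_sum]
      exact Finset.sum_congr rfl fun k _ => by ring
    · have := hγ.energy_pos (s := s) ⟨hs.1, hs.2.le.trans hδ.2⟩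
      have := hGδ s ⟨hs.1.le, hs.2.le⟩
      have : 0 ≤ G s := by linarith
      positivity
  rw [← Ioc_union_Ioc_eq_Ioc hδ.1.le hδ.2]
  refine IntegrableOn.union ?_ ?_
  · refine (hint.const_mul (2 / G 0)).mono'
      ((hmeas.mono (Ioc_subset_Ioc_right hδ.2)).aestronglyMeasurable measurableSet_Ioc) ?_
    filter_upwards [ae_restrict_mem measurableSet_Ioc] with s hs
    have hf := hγ.energy_pos (s := s) ⟨hs.1, hs.2.trans hδ.2⟩
    have h1 := hGδ s ⟨hs.1.le, hs.2⟩
    rw [Real.norm_eq_abs, abs_of_pos (by positivity)]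
    have h2 : 1 ≤ 2 / G 0 * G s := by
      rw [div_mul_eq_mul_div, one_le_div hG0]
      linarith
    calc 1 / (S.E - S.V (γ s)) = 1 / (S.E - S.V (γ s)) * 1 := (mul_one _).symm
      _ ≤ 1 / (S.E - S.V (γ s)) * (2 / G 0 * G s) := by gcongr
      _ = _ := by ring
  · exact ((hmeas.mono fun s hs => ⟨hδ.1.trans_le hs.1, hs.2⟩).integrableOn_Icc).mono_set
      Ioc_subset_Icc_self

end IsBdryGeo

end Setting

lemma _root_.AbsolutelyContinuousOnInterval.congr_of_eqOn {f g : ℝ → ℝ} {a b : ℝ}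
    (hf : AbsolutelyContinuousOnInterval f a b) (h : EqOn f g (uIcc a b)) :
    AbsolutelyContinuousOnInterval g a b := by
  refine Tendsto.congr' ?_ hf
  filter_upwards [mem_inf_of_right (mem_principal_self _)] with E hE
  exact Finset.sum_congr rfl fun i hi => by rw [h (hE.1 i hi).1, h (hE.1 i hi).2]

lemma _root_.AbsolutelyContinuousOnInterval.lipschitzOnWith_comp {f φ : ℝ → ℝ} {a b : ℝ}
    {K : NNReal} {t : Set ℝ} (hφ : LipschitzOnWith K φ t)
    (hf : AbsolutelyContinuousOnInterval f a b) (hft : MapsTo f (uIcc a b) t) :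
    AbsolutelyContinuousOnInterval (fun x => φ (f x)) a b := by
  refine squeeze_zero' (Eventually.of_forall fun E => Finset.sum_nonneg fun i _ => dist_nonneg)
    ?_ (by simpa using Tendsto.const_mul (K : ℝ) hf)
  filter_upwards [mem_inf_of_right (mem_principal_self _)] with E hE
  rw [Finset.mul_sum]
  exact Finset.sum_le_sum fun i hi =>
    hφ.dist_le_mul _ (hft (hE.1 i hi).1) _ (hft (hE.1 i hi).2)

lemma lipschitzOnWith_sqrt {δ : ℝ} (hδ : 0 < δ) :
    LipschitzOnWith (Real.toNNReal (1 / √δ)) Real.sqrt (Ici δ) := by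
  refine LipschitzOnWith.of_dist_le_mul fun x hx y hy => ?_
  have hx' : δ ≤ x := hx
  have hy' : δ ≤ y := hy
  have h1 := Real.sqrt_le_sqrt hx'
  have h2 := Real.sqrt_nonneg y
  have h0 := Real.sqrt_pos.2 hδ
  rw [Real.coe_toNNReal _ (by positivity), Real.dist_eq, Real.dist_eq, one_div_mul_eq_div,
    le_div_iff₀ h0]
  have h3 : |x - y| = |√x - √y| * |√x + √y| := by
    rw [← abs_mul]
    congr 1
    nlinarith [Real.sq_sqrt (hδ.le.trans hx'), Real.sq_sqrt (hδ.le.trans hy')]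
  rw [h3, abs_of_nonneg (by linarith : 0 ≤ √x + √y)]
  gcongr
  linarith

lemma ACOn.absolutelyContinuousOnInterval {ξ : ℝ → Vec N} {a b : ℝ} (hab : a ≤ b)
    (h : ACOn ξ a b) (k : Fin N) : AbsolutelyContinuousOnInterval (fun t => ξ t k) a b := by
  have hint : IntervalIntegrable (deriv ξ) volume a b :=
    (intervalIntegrable_iff_integrableOn_Icc_of_le hab).2 h.2.1
  have hk : IntervalIntegrable (fun s => deriv ξ s k) volume a b :=
    ⟨hint.1.eval k, hint.2.eval k⟩
  have hac := hk.absolutelyContinuousOnInterval_intervalIntegral (c := a) left_mem_uIcc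
  have hconst : AbsolutelyContinuousOnInterval (fun _ : ℝ => ξ a k) a b :=
    contDiffOn_const.absolutelyContinuousOnInterval
  refine (hconst.add hac).congr_of_eqOn fun t ht => ?_
  rw [uIcc_of_le hab] at ht
  have := congrFun (h.2.2 t ht) k
  rw [Pi.add_apply] at this
  rw [Pi.add_apply, this]
  congr 1
  have hsub : IntervalIntegrable (deriv ξ) volume a t := hint.mono_set (by
    rw [uIcc_of_le hab, uIcc_of_le ht.1]
    exact Icc_subset_Icc_right ht.2)
  exact ContinuousLinearMap.intervalIntegral_comp_comm
    (ContinuousLinearMap.proj (R := ℝ) (φ := fun _ : Fin N => ℝ) k) hsub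

lemma ACOn.ae_hasDerivAt {ξ : ℝ → Vec N} {a b : ℝ} (hab : a ≤ b) (h : ACOn ξ a b) :
    ∀ᵐ t, t ∈ Icc a b → HasDerivAt ξ (deriv ξ t) t := by
  filter_upwards [ae_all_iff.2 fun k =>
    (h.absolutelyContinuousOnInterval hab k).ae_differentiableAt] with t ht htI
  exact (differentiableAt_pi.2 fun k => ht k (by rwa [uIcc_of_le hab])).hasDerivAt

lemma _root_.AbsolutelyContinuousOnInterval.fun_sum {ι : Type*} (s : Finset ι) {f : ι → ℝ → ℝ}
    {a b : ℝ} (h : ∀ i ∈ s, AbsolutelyContinuousOnInterval (f i) a b) :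
    AbsolutelyContinuousOnInterval (fun t => ∑ i ∈ s, f i t) a b := by
  classical
  induction s using Finset.induction_on with
  | empty =>
    simp only [Finset.sum_empty]
    exact contDiffOn_const.absolutelyContinuousOnInterval
  | insert i s hi ih =>
    simp only [Finset.sum_insert hi]
    exact (h i (Finset.mem_insert_self i s)).fun_add
      (ih fun j hj => h j (Finset.mem_insert_of_mem hj))

/-- Cauchy-Schwarz for the square roots of two nonnegative integrable functions. -/
lemma integral_sqrt_mul_sqrt_le {α : Type*} [MeasurableSpace α] {μ : Measure α} {f g : α → ℝ}
    (hf : Integrable f μ) (hg : Integrable g μ) (hf0 : 0 ≤ᵐ[μ] f) (hg0 : 0 ≤ᵐ[μ] g) :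
    Integrable (fun x => √(f x) * √(g x)) μ ∧
      ∫ x, √(f x) * √(g x) ∂μ ≤ √(∫ x, f x ∂μ) * √(∫ x, g x ∂μ) := by
  have key {h : α → ℝ} (hh : Integrable h μ) (h0 : 0 ≤ᵐ[μ] h) :
      MemLp (fun x => √(h x)) 2 μ ∧ ∫ x, √(h x) ^ (2 : ℝ) ∂μ = ∫ x, h x ∂μ := by
    have e : (fun x => √(h x) ^ 2) =ᵐ[μ] h := by
      filter_upwards [h0] with x hx using Real.sq_sqrt hx
    refine ⟨(memLp_two_iff_integrable_sq
      (Real.continuous_sqrt.comp_aestronglyMeasurable hh.aestronglyMeasurable)).2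
        (hh.congr e.symm), ?_⟩
    simp only [Real.rpow_two]
    exact integral_congr_ae e
  obtain ⟨hf2, ef⟩ := key hf hf0
  obtain ⟨hg2, eg⟩ := key hg hg0
  refine ⟨hf2.integrable_mul hg2, ?_⟩
  have h := integral_mul_le_Lp_mul_Lq_of_nonneg (p := 2) (q := 2) (μ := μ)
    Real.HolderConjugate.two_two
    (Eventually.of_forall fun x => Real.sqrt_nonneg (f x))
    (Eventually.of_forall fun x => Real.sqrt_nonneg (g x)) (by simpa using hf2) (by simpa using hg2)
  rwa [ef, eg, ← Real.sqrt_eq_rpow, ← Real.sqrt_eq_rpow] at h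

namespace Setting

variable {S : Setting N} {γ : ℝ → Vec N} {a : ℝ}

/-- The Levi-Civita connection is compatible with the metric: the derivative of `g(ξ,ξ)` along a
curve is `2 g(ξ, Dξ)`. -/
lemma hasDerivAt_prod_self {ξ : ℝ → Vec N} {s : ℝ} (hU : γ s ∈ S.U)
    (hγ : HasDerivAt γ (deriv γ s) s) (hξ : HasDerivAt ξ (deriv ξ s) s) :
    HasDerivAt (fun t => S.prod (γ t) (ξ t) (ξ t))
      (2 * S.prod (γ s) (ξ s) (S.covD γ (deriv γ) ξ (deriv ξ) s)) s := by
  have hg (i j : Fin N) : HasDerivAt (fun t => S.g (γ t) i j)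
      (∑ k, deriv γ s k * fderiv ℝ (fun y => S.g y i j) (γ s) (Pi.single k 1)) s := by
    refine (((contDiffAt_g hU i j).differentiableAt
      (by norm_num)).hasFDerivAt.comp_hasDerivAt s hγ).congr_deriv ?_
    exact fderiv_eq_euclGrad (fun y => S.g y i j) _ _
  have h := HasDerivAt.fun_sum (u := Finset.univ) fun i _ =>
    HasDerivAt.fun_sum (u := Finset.univ) fun j _ =>
      ((hg i j).mul (hasDerivAt_pi.1 hξ i)).mul (hasDerivAt_pi.1 hξ j)
  refine h.congr_deriv ?_
  set x := γ s
  set v := deriv γ s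
  set η := deriv ξ s
  set d : Fin N → Fin N → Fin N → ℝ :=
    fun k i j => fderiv ℝ (fun y => S.g y i j) x (Pi.single k 1) with hd
  have hdsymm (k i j) : d k i j = d k j i := by
    have : (fun y => S.g y i j) =ᶠ[𝓝 x] fun y => S.g y j i := by
      filter_upwards [S.hU.mem_nhds hU] with y hy using S.hgsymm y hy i j
    simp only [hd, this.fderiv_eq]
  have hcov : S.covD γ (deriv γ) ξ (deriv ξ) s = η + (S.g x)⁻¹ *ᵥ
      fun l => ∑ i, ∑ j, 1 / 2 * (d i l j + d j l i - d l i j) * v i * ξ s j := by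
    ext k
    simp only [covD, christoffel, mulVec, dotProduct, Pi.add_apply, Finset.mul_sum,
      Finset.sum_mul]
    congr 1
    symm
    rw [Finset.sum_comm]
    refine Finset.sum_congr rfl fun i _ => ?_
    rw [Finset.sum_comm]
    exact Finset.sum_congr rfl fun j _ => Finset.sum_congr rfl fun l _ => by ring
  rw [hcov]
  have hlin : S.prod x (ξ s) (η + (S.g x)⁻¹ *ᵥ
      fun l => ∑ i, ∑ j, 1 / 2 * (d i l j + d j l i - d l i j) * v i * ξ s j)
      = S.prod x (ξ s) η + ξ s ⬝ᵥ
      fun l => ∑ i, ∑ j, 1 / 2 * (d i l j + d j l i - d l i j) * v i * ξ s j := by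
    rw [← prod_inv_mulVec hU, prod_eq_dotProduct, prod_eq_dotProduct, prod_eq_dotProduct,
      mulVec_add, dotProduct_add]
  have hη : ∑ i, ∑ j, S.g x i j * η i * ξ s j = S.prod x (ξ s) η := by
    rw [prod_comm hU]
    rfl
  have hswap : ∑ l, ∑ i, ∑ j, d j l i * ξ s l * v i * ξ s j
      = ∑ l, ∑ i, ∑ j, d l i j * ξ s l * v i * ξ s j := by
    have (f : Fin N → Fin N → Fin N → ℝ) :
        ∑ l, ∑ i, ∑ j, f l i j = ∑ l, ∑ i, ∑ j, f j i l := by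
      rw [Finset.sum_comm]
      conv_rhs => rw [Finset.sum_comm]
      exact Finset.sum_congr rfl fun i _ => Finset.sum_comm
    rw [this]
    refine Finset.sum_congr rfl fun l _ => Finset.sum_congr rfl fun i _ =>
      Finset.sum_congr rfl fun j _ => ?_
    rw [hdsymm l j i]
    ring
  have hchr : ξ s ⬝ᵥ (fun l => ∑ i, ∑ j, 1 / 2 * (d i l j + d j l i - d l i j) * v i * ξ s j)
      = 1 / 2 * ∑ l, ∑ i, ∑ j, d i l j * ξ s l * v i * ξ s j := by
    have e : ξ s ⬝ᵥ (fun l => ∑ i, ∑ j, 1 / 2 * (d i l j + d j l i - d l i j) * v i * ξ s j)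
        = 1 / 2 * (∑ l, ∑ i, ∑ j, d i l j * ξ s l * v i * ξ s j
          + ∑ l, ∑ i, ∑ j, d j l i * ξ s l * v i * ξ s j
          - ∑ l, ∑ i, ∑ j, d l i j * ξ s l * v i * ξ s j) := by
      simp only [dotProduct, Finset.mul_sum, ← Finset.sum_add_distrib, ← Finset.sum_sub_distrib]
      exact Finset.sum_congr rfl fun l _ => Finset.sum_congr rfl fun i _ =>
        Finset.sum_congr rfl fun j _ => by ring
    rw [e, hswap]
    ring
  have hA : ∑ i, ∑ j, (∑ k, v k * d k i j) * ξ s i * ξ s j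
      = ∑ l, ∑ i, ∑ j, d i l j * ξ s l * v i * ξ s j := by
    refine Finset.sum_congr rfl fun i _ => ?_
    rw [Finset.sum_comm]
    refine Finset.sum_congr rfl fun j _ => ?_
    simp only [Finset.sum_mul]
    exact Finset.sum_congr rfl fun k _ => by ring
  rw [hlin, hchr, ← hA]
  calc _ = ∑ i, ∑ j, (∑ k, v k * d k i j) * ξ s i * ξ s j + ∑ i, ∑ j, S.g x i j * η i * ξ s j
        + S.prod x (ξ s) η := by
        simp only [prod, gP, ← Finset.sum_add_distrib]
        exact Finset.sum_congr rfl fun i _ => Finset.sum_congr rfl fun j _ => by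
          rw [add_mul]
          rfl
    _ = _ := by
        rw [hη]
        ring

lemma IsBdryGeo.absolutelyContinuousOnInterval_prod_self (hγ : S.IsBdryGeo γ a) {ξ : ℝ → Vec N}
    {s u : ℝ} (hs : s ≤ a) (hAC : ACOn ξ 0 s) (hu : u ∈ Ioc 0 s) :
    AbsolutelyContinuousOnInterval (fun t => S.prod (γ t) (ξ t) (ξ t)) u s := by
  have hsub : uIcc u s ⊆ Ioc 0 a := by
    rw [uIcc_of_le hu.2]
    exact fun t ht => ⟨hu.1.trans_le ht.1, ht.2.trans hs⟩
  have hξ (k : Fin N) : AbsolutelyContinuousOnInterval (fun t => ξ t k) u s :=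
    (hAC.absolutelyContinuousOnInterval (hu.1.le.trans hu.2) k).mono (by
      rw [uIcc_of_le hu.2, uIcc_of_le (hu.1.le.trans hu.2)]
      exact Icc_subset_Icc_left hu.1.le)
  have hg (i j : Fin N) : AbsolutelyContinuousOnInterval (fun t => S.g (γ t) i j) u s := by
    refine ContDiffOn.absolutelyContinuousOnInterval fun t ht => ContDiffAt.contDiffWithinAt ?_
    have hx := hγ.mem_U (Ioc_subset_Icc_self (hsub ht))
    have h1 : ContDiffAt ℝ 1 (fun y => S.g y i j) (γ t) :=
      (contDiffAt_g hx i j).of_le (by norm_num)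
    have h2 : ContDiffAt ℝ 1 γ t := (hγ.2.2.1 t (hsub ht)).of_le (by norm_num)
    exact h1.comp t h2
  simp only [prod, gP]
  exact AbsolutelyContinuousOnInterval.fun_sum _ fun i _ =>
    AbsolutelyContinuousOnInterval.fun_sum _ fun j _ => ((hg i j).fun_mul (hξ i)).fun_mul (hξ j)

lemma IsBdryGeo.gnorm_le_add_integral (hγ : S.IsBdryGeo γ a) {ξ : ℝ → Vec N}
    {s u : ℝ} (hs : s ≤ a) (hAC : ACOn ξ 0 s) (hu : u ∈ Ioc 0 s)
    (hint : IntervalIntegrable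
      (fun t => S.gnorm (γ t) (S.covD γ (deriv γ) ξ (deriv ξ) t)) volume u s) :
    S.gnorm (γ u) (ξ u) ≤ S.gnorm (γ s) (ξ s)
      + ∫ t in u..s, S.gnorm (γ t) (S.covD γ (deriv γ) ξ (deriv ξ) t) := by
  have hsub : Icc u s ⊆ Ioc 0 a := fun t ht => ⟨hu.1.trans_le ht.1, ht.2.trans hs⟩
  have hac := hγ.absolutelyContinuousOnInterval_prod_self hs hAC hu
  have hreg (δ : ℝ) (hδ : 0 < δ) : √(S.prod (γ u) (ξ u) (ξ u) + δ) ≤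
      √(S.prod (γ s) (ξ s) (ξ s) + δ)
        + ∫ t in u..s, S.gnorm (γ t) (S.covD γ (deriv γ) ξ (deriv ξ) t) := by
    have hF : AbsolutelyContinuousOnInterval
        (fun t => √(S.prod (γ t) (ξ t) (ξ t) + δ)) u s := by
      refine AbsolutelyContinuousOnInterval.lipschitzOnWith_comp (lipschitzOnWith_sqrt hδ)
        (hac.fun_add (contDiffOn_const (c := δ)).absolutelyContinuousOnInterval) fun t ht => ?_
      rw [uIcc_of_le hu.2] at ht
      exact le_add_of_nonneg_left
        (prod_self_nonneg (hγ.mem_U (Ioc_subset_Icc_self (hsub ht))) _)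
    have hle : ∫ t in u..s, -S.gnorm (γ t) (S.covD γ (deriv γ) ξ (deriv ξ) t)
        ≤ ∫ t in u..s, deriv (fun t => √(S.prod (γ t) (ξ t) (ξ t) + δ)) t := by
      refine intervalIntegral.integral_mono_ae_restrict hu.2 hint.neg
        hF.intervalIntegrable_deriv ?_
      filter_upwards [ae_restrict_mem measurableSet_Icc,
        ae_restrict_of_ae (hAC.ae_hasDerivAt (hu.1.le.trans hu.2))] with t ht hξ
      have hU := hγ.mem_U (Ioc_subset_Icc_self (hsub ht))
      have hpos : 0 < S.prod (γ t) (ξ t) (ξ t) + δ :=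
        add_pos_of_nonneg_of_pos (prod_self_nonneg hU _) hδ
      have h := ((hasDerivAt_prod_self hU (hγ.hasDerivAt_curve (hsub ht))
        (hξ ⟨hu.1.le.trans ht.1, ht.2⟩)).add_const δ).sqrt hpos.ne'
      rw [h.deriv, mul_div_mul_left _ _ two_ne_zero, le_div_iff₀ (Real.sqrt_pos.2 hpos),
        neg_mul, neg_le, gnorm, ← Real.sqrt_mul (prod_self_nonneg hU _)]
      refine (neg_le_abs _).trans (Real.abs_le_sqrt ?_)
      refine (prod_sq_le hU _ _).trans ?_
      rw [mul_comm]
      exact mul_le_mul_of_nonneg_left (le_add_of_nonneg_right hδ.le) (prod_self_nonneg hU _)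
    rw [hF.integral_deriv_eq_sub, intervalIntegral.integral_neg] at hle
    linarith
  have hlim (c : ℝ) : Tendsto (fun δ => √(c + δ)) (𝓝[>] 0) (𝓝 √c) := by
    have : Continuous fun δ => √(c + δ) := by fun_prop
    simpa using (this.tendsto 0).mono_left nhdsWithin_le_nhds
  exact le_of_tendsto_of_tendsto (hlim _) ((hlim _).add_const _)
    (by filter_upwards [self_mem_nhdsWithin] with δ hδ using hreg δ hδ)

end Setting

/-- **Remark 4.11**: a field with finite weighted norm along `γ|[0,s*]` is bounded,
with `‖ξ‖_∞ ≤ ‖W‖ + (∫₀^{s*}(E−V(γ))‖Dξ/ds‖²)^{1/2} (∫₀^{s*}‖γ̇‖²)^{1/2}`;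
moreover `∫₀^{s*}‖γ̇‖² ds` is finite (since `‖γ̇(s)‖` behaves like `s^{−1/3}`). -/
theorem sup_norm_bound {N : ℕ} (S : Setting N) (γ : ℝ → Vec N) (a : ℝ)
    (hγ : S.IsBdryGeo γ a) (sstar : ℝ) (hs : sstar ∈ Ioc (0:ℝ) a)
    (W : Vec N) (ξ : ℝ → Vec N)
    (hAC : ACOn ξ 0 sstar)
    (hfin : IntegrableOn (fun u => (S.E - S.V (γ u)) *
      S.prod (γ u) (S.covD γ (deriv γ) ξ (deriv ξ) u)
        (S.covD γ (deriv γ) ξ (deriv ξ) u)) (Icc 0 sstar))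
    (hend : ξ sstar = W) :
    IntegrableOn (fun u => S.prod (γ u) (deriv γ u) (deriv γ u)) (Icc 0 sstar) ∧
    ∀ u ∈ Icc 0 sstar,
      S.gnorm (γ u) (ξ u) ≤ S.gnorm (γ sstar) W
        + Real.sqrt (S.wNormSq γ sstar ξ)
          * Real.sqrt (∫ v in (0:ℝ)..sstar, S.prod (γ v) (deriv γ v) (deriv γ v)) := by
  have hs0 : 0 ≤ sstar := hs.1.le
  have hsub : Ioc 0 sstar ⊆ Ioc 0 a := Ioc_subset_Ioc_right hs.2
  have hinv : IntegrableOn (fun v => 1 / (S.E - S.V (γ v))) (Ioc 0 sstar) :=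
    hγ.integrableOn_inv_energy.mono_set hsub
  have hprod : IntegrableOn (fun v => S.prod (γ v) (deriv γ v) (deriv γ v)) (Ioc 0 sstar) := by
    refine IntegrableOn.congr_fun (hinv.const_mul 2) (fun v hv => ?_) measurableSet_Ioc
    rw [hγ.prod_deriv_eq (hsub hv)]
    ring
  refine ⟨(integrableOn_Icc_iff_integrableOn_Ioc enorm_ne_top).2 hprod, ?_⟩
  have hfin' := (integrableOn_Icc_iff_integrableOn_Ioc enorm_ne_top).1 hfin
  set D : ℝ → Vec N := fun v => S.covD γ (deriv γ) ξ (deriv ξ) v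
  have hpos (u : ℝ) (hu : u ∈ Ioc 0 sstar) :
      S.gnorm (γ u) (ξ u) ≤ S.gnorm (γ sstar) W + √(S.wNormSq γ sstar ξ)
        * √(∫ v in (0:ℝ)..sstar, S.prod (γ v) (deriv γ v) (deriv γ v)) := by
    have hus : Ioc u sstar ⊆ Ioc 0 sstar := Ioc_subset_Ioc_left hu.1.le
    have hDnn {v : ℝ} (hv : v ∈ Ioc 0 sstar) : 0 ≤ S.prod (γ v) (D v) (D v) :=
      Setting.prod_self_nonneg (hγ.mem_U (Ioc_subset_Icc_self (hsub hv))) _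
    have hfnn {v : ℝ} (hv : v ∈ Ioc 0 sstar) :
        0 ≤ (S.E - S.V (γ v)) * S.prod (γ v) (D v) (D v) :=
      mul_nonneg (hγ.energy_pos (hsub hv)).le (hDnn hv)
    have hinn {v : ℝ} (hv : v ∈ Ioc 0 sstar) : 0 ≤ 1 / (S.E - S.V (γ v)) :=
      one_div_nonneg.2 (hγ.energy_pos (hsub hv)).le
    have hae {f : ℝ → ℝ} {t : Set ℝ} (ht : MeasurableSet t) (h : ∀ v ∈ t, 0 ≤ f v) :
        0 ≤ᵐ[volume.restrict t] f := by
      filter_upwards [ae_restrict_mem ht] with v hv using h v hv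
    obtain ⟨hi, hle⟩ := integral_sqrt_mul_sqrt_le (hfin'.mono_set hus) (hinv.mono_set hus)
      (hae measurableSet_Ioc fun v hv => hfnn (hus hv))
      (hae measurableSet_Ioc fun v hv => hinn (hus hv))
    have hcongr : EqOn (fun v => √((S.E - S.V (γ v)) * S.prod (γ v) (D v) (D v))
        * √(1 / (S.E - S.V (γ v)))) (fun v => S.gnorm (γ v) (D v)) (Ioc u sstar) := by
      intro v hv
      have := hγ.energy_pos (hsub (hus hv))
      simp only [Setting.gnorm]
      rw [← Real.sqrt_mul (hfnn (hus hv))]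
      congr 1
      field_simp
    rw [setIntegral_congr_fun measurableSet_Ioc hcongr] at hle
    have hnorm := hγ.gnorm_le_add_integral hs.2 hAC hu
      ((intervalIntegrable_iff_integrableOn_Ioc_of_le hu.2).2
        (IntegrableOn.congr_fun hi hcongr measurableSet_Ioc))
    rw [hend, intervalIntegral.integral_of_le hu.2] at hnorm
    refine hnorm.trans (add_le_add_right (hle.trans ?_) _)
    rw [Setting.wNormSq, intervalIntegral.integral_of_le hs0, intervalIntegral.integral_of_le hs0]
    gcongr √?_ * √?_
    · exact setIntegral_mono_set hfin' (hae measurableSet_Ioc fun v hv => hfnn hv)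
        hus.eventuallyLE
    · refine (setIntegral_mono_set hinv (hae measurableSet_Ioc fun v hv => hinn hv)
        hus.eventuallyLE).trans (setIntegral_mono_on hinv hprod measurableSet_Ioc fun v hv => ?_)
      have := hγ.energy_pos (hsub hv)
      rw [hγ.prod_deriv_eq (hsub hv)]
      gcongr
      norm_num
  intro u hu
  rcases hu.1.eq_or_lt with rfl | h
  · have hsub' : Icc 0 sstar ⊆ Icc 0 a := Icc_subset_Icc_right hs.2
    have hc : ContinuousWithinAt (fun v => S.gnorm (γ v) (ξ v)) (Icc 0 sstar) 0 := by
      have hξ (i : Fin N) : ContinuousWithinAt (fun v => ξ v i) (Icc 0 sstar) 0 :=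
        continuousWithinAt_pi.1 (hAC.1 0 hu) i
      have hg (i j : Fin N) : ContinuousWithinAt (fun v => S.g (γ v) i j) (Icc 0 sstar) 0 :=
        (Setting.contDiffAt_g (hγ.mem_U (hsub' hu)) i j).continuousAt.comp_continuousWithinAt
          ((hγ.2.1 0 (hsub' hu)).mono hsub')
      have h : ContinuousWithinAt (fun v => S.prod (γ v) (ξ v) (ξ v)) (Icc 0 sstar) 0 := by
        simp only [Setting.prod, gP]
        exact tendsto_finsetSum _ fun i _ =>
          tendsto_finsetSum _ fun j _ => ((hg i j).mul (hξ i)).mul (hξ j)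
      exact h.sqrt
    have hc' : Tendsto (fun v => S.gnorm (γ v) (ξ v)) (𝓝[>] 0) (𝓝 (S.gnorm (γ 0) (ξ 0))) := by
      rw [← nhdsWithin_Ioc_eq_nhdsGT hs.1]
      exact hc.mono_left (nhdsWithin_mono _ Ioc_subset_Icc_self)
    refine le_of_tendsto hc' ?_
    filter_upwards [Ioc_mem_nhdsGT hs.1] with v hv using hpos v hv
  · exact hpos u ⟨h, hu.2⟩

end
end JacobiPaper
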